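/- If P satisfies a margin condition with radius r_0 and is ε-separated, then for all c ∈ B(0,M)^k, ‖c − c*(c)‖² ≤ κ_0 ℓ(c, c*(c)), where c*(c) ∈ argmin_{c* ∈ M} ‖c − c*‖ is an optimal codebook nearest to c and κ_0 = 4kM² · max(1/ε, 64 M² / (p_min B² r_0²)). -/

import Mathlib

open MeasureTheory Metric

noncomputable section

variable {H : Type*} [NormedAddCommGroup H] [InnerProductSpace ℝ H] [MeasurableSpace H]

/-- `qgamma k c x = min_j ‖x - c j‖²`. -/
def qgamma (k : ℕ) (c : Fin k → H) (x : H) : ℝ := ⨅ j : Fin k, ‖x - c j‖ ^ 2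

/-- distortion (risk) of a codebook. -/
def qrisk (k : ℕ) (P : Measure H) (c : Fin k → H) : ℝ := ∫ x, qgamma k c x ∂P

/-- the set of optimal codebooks. -/
def qopt (k : ℕ) (P : Measure H) : Set (Fin k → H) :=
  {c | ∀ c' : Fin k → H, qrisk k P c ≤ qrisk k P c'}

/-- the `i`-th (closed) Voronoi cell of the codebook `c`. -/
def vcell (k : ℕ) (c : Fin k → H) (i : Fin k) : Set H :=
  {x | ∀ j : Fin k, ‖x - c i‖ ≤ ‖x - c j‖}

/-- `B`, the minimal separation between code points of optimal codebooks. -/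
def qB (k : ℕ) (P : Measure H) : ℝ :=
  sInf {b | ∃ c ∈ qopt k P, ∃ i j : Fin k, i ≠ j ∧ b = ‖c i - c j‖}

/-- `p_min`, the minimal mass of a Voronoi cell of an optimal codebook. -/
def qpmin (k : ℕ) (P : Measure H) : ℝ :=
  sInf {p | ∃ c ∈ qopt k P, ∃ i : Fin k, p = (P (vcell k c i)).toReal}

/-- `N_{c*}`, the union of the boundaries between Voronoi cells. -/
def nbd (k : ℕ) (c : Fin k → H) : Set H :=
  ⋃ (i : Fin k) (j : Fin k) (_ : i ≠ j), vcell k c i ∩ vcell k c j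

/-- the weight function `p(t)`, the maximal mass of the closed `t`-neighborhood
of `N_{c*}` over optimal codebooks `c*`. -/
def pweight (k : ℕ) (P : Measure H) (t : ℝ) : ℝ :=
  sSup {p | ∃ c ∈ qopt k P, p = (P (cthickening t (nbd k c))).toReal}

/-- `P` is `M`-bounded: its support is contained in the closed ball `B(0,M)`. -/
def mbounded (P : Measure H) (M : ℝ) : Prop := P (closedBall (0 : H) M)ᶜ = 0

/-- the support of `P` contains more than `k` points. -/
def suppGT (P : Measure H) (k : ℕ) : Prop :=
  ∀ S : Finset H, S.card ≤ k → P ((S : Set H)ᶜ) ≠ 0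

/-- the margin condition with radius `r0`. -/
def margin (k : ℕ) (P : Measure H) (M r0 : ℝ) : Prop :=
  0 < r0 ∧ mbounded P M ∧
    ∀ t : ℝ, 0 ≤ t → t ≤ r0 → pweight k P t ≤ qB k P * qpmin k P * t / (128 * M ^ 2)

/-- `P` is `ε`-separated: the infimum of the excess risk over local minimizers of
the distortion which are not optimal codebooks equals `ε`. -/
def qseparated (k : ℕ) (P : Measure H) (ε : ℝ) : Prop :=
  ∀ cs ∈ qopt k P,
    sInf {r | ∃ c : Fin k → H, IsLocalMin (qrisk k P) c ∧ c ∉ qopt k P ∧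
      r = qrisk k P c - qrisk k P cs} = ε

set_option linter.all false
set_option linter.unusedSectionVars false
open Filter Topology

section helpers

variable {k : ℕ} {P : Measure H} {M : ℝ}

lemma qgamma_le (c : Fin k → H) (x : H) (j : Fin k) : qgamma k c x ≤ ‖x - c j‖ ^ 2 :=
  ciInf_le (Set.finite_range _).bddBelow j

lemma qgamma_exists (hk : 2 ≤ k) (c : Fin k → H) (x : H) :
    ∃ j, qgamma k c x = ‖x - c j‖ ^ 2 := by
  haveI : Nonempty (Fin k) := ⟨⟨0, by omega⟩⟩
  obtain ⟨j, hj⟩ := exists_eq_ciInf_of_finite (f := fun j : Fin k => ‖x - c j‖ ^ 2)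
  exact ⟨j, hj.symm⟩

lemma qgamma_nonneg (c : Fin k → H) (x : H) : 0 ≤ qgamma k c x :=
  Real.iInf_nonneg fun _ => by positivity

lemma mem_vcell_of_eq {c : Fin k → H} {x : H} {j : Fin k} (h : qgamma k c x = ‖x - c j‖ ^ 2) :
    x ∈ vcell k c j := by
  intro l
  have := qgamma_le c x l
  rw [h] at this
  exact le_of_sq_le_sq this (norm_nonneg _)

lemma qgamma_of_mem (hk : 2 ≤ k) {c : Fin k → H} {x : H} {j : Fin k} (h : x ∈ vcell k c j) :
    qgamma k c x = ‖x - c j‖ ^ 2 := by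
  refine le_antisymm (qgamma_le c x j) ?_
  obtain ⟨l, hl⟩ := qgamma_exists hk c x
  rw [hl]
  have := h l
  gcongr

lemma qgamma_continuous (hk : 2 ≤ k) (c : Fin k → H) : Continuous (qgamma k c) := by
  haveI : Nonempty (Fin k) := ⟨⟨0, by omega⟩⟩
  have : qgamma k c = fun x => Finset.univ.inf' Finset.univ_nonempty
      (fun j : Fin k => ‖x - c j‖ ^ 2) := by
    funext x
    rw [Finset.inf'_univ_eq_ciInf]
    rfl
  rw [this]
  exact Continuous.finset_inf'_apply _ fun i _ => by fun_prop

lemma ae_ball (hb : mbounded P M) : ∀ᵐ x ∂P, ‖x‖ ≤ M := by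
  have : (closedBall (0 : H) M)ᶜ = {x | ¬ ‖x‖ ≤ M} := by
    ext x; simp
  rw [mbounded, this] at hb
  exact hb

variable [BorelSpace H] [SecondCountableTopology H] [IsProbabilityMeasure P]

lemma integrable_of_cont {f : H → ℝ} (hb : mbounded P M) (hf : Continuous f) (C : ℝ)
    (hC : ∀ x, ‖x‖ ≤ M → |f x| ≤ C) : Integrable f P := by
  refine Integrable.of_bound hf.aestronglyMeasurable C ?_
  filter_upwards [ae_ball hb] with x hx
  exact hC x hx

lemma sq_bound {x y : H} (hx : ‖x‖ ≤ M) : |‖x - y‖ ^ 2| ≤ (M + ‖y‖) ^ 2 := by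
  rw [abs_of_nonneg (by positivity)]
  have := norm_sub_le x y
  gcongr
  linarith

lemma integrable_sq (hb : mbounded P M) (y : H) : Integrable (fun x => ‖x - y‖ ^ 2) P :=
  integrable_of_cont hb (by fun_prop) ((M + ‖y‖) ^ 2) fun _ hx => sq_bound hx

lemma integrable_qgamma (hk : 2 ≤ k) (hb : mbounded P M) (c : Fin k → H) :
    Integrable (qgamma k c) P := by
  refine integrable_of_cont hb (qgamma_continuous hk c) ((M + ‖c ⟨0, by omega⟩‖) ^ 2) ?_
  intro x hx
  rw [abs_of_nonneg (qgamma_nonneg c x)]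
  exact (qgamma_le c x ⟨0, by omega⟩).trans ((le_abs_self _).trans (sq_bound hx))

/-- Comparison of risks. -/
lemma qrisk_le_add (hk : 2 ≤ k) (hb : mbounded P M) (c c' : Fin k → H) (e : ℝ)
    (h : ∀ x, ‖x‖ ≤ M → ∀ j, ∃ j', ‖x - c' j'‖ ^ 2 ≤ ‖x - c j‖ ^ 2 + e) :
    qrisk k P c' ≤ qrisk k P c + e := by
  have h1 : qrisk k P c + e = ∫ x, (qgamma k c x + e) ∂P := by
    rw [integral_add (integrable_qgamma hk hb c) (integrable_const _)]
    simp [qrisk]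
  rw [h1]
  refine integral_mono_ae (integrable_qgamma hk hb c')
    ((integrable_qgamma hk hb c).add (integrable_const _)) ?_
  filter_upwards [ae_ball hb] with x hx
  obtain ⟨j, hj⟩ := qgamma_exists hk c x
  obtain ⟨j', hj'⟩ := h x hx j
  have := qgamma_le c' x j'
  simp only [hj]
  linarith

lemma sq_diff_le {x a b : H} (hx : ‖x‖ ≤ M) (ha : ‖a‖ ≤ M) (hb : ‖b‖ ≤ M) :
    ‖x - a‖ ^ 2 ≤ ‖x - b‖ ^ 2 + 4 * M * ‖a - b‖ := by
  have h1 : ‖x - a‖ ≤ ‖x - b‖ + ‖a - b‖ := by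
    have := norm_sub_le (x - b) (a - b)
    simpa using this
  have h2 : ‖x - a‖ ≤ 2 * M := by linarith [norm_sub_le x a]
  have h3 : ‖x - b‖ ≤ 2 * M := by linarith [norm_sub_le x b]
  nlinarith [norm_nonneg (a - b), norm_nonneg (x - a), norm_nonneg (x - b)]

lemma qrisk_lip (hk : 2 ≤ k) (hb : mbounded P M) (c c' : Fin k → H) (d : ℝ)
    (hc : ∀ i, ‖c i‖ ≤ M) (hc' : ∀ i, ‖c' i‖ ≤ M) (h : ∀ i, ‖c' i - c i‖ ≤ d) (hM : 0 < M) :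
    qrisk k P c' ≤ qrisk k P c + 4 * M * d := by
  refine qrisk_le_add hk hb c c' _ fun x hx j => ⟨j, ?_⟩
  have := sq_diff_le hx (hc' j) (hc j)
  have := h j
  nlinarith

/-- radial projection -/
def rproj (M : ℝ) (y : H) : H := (M / max M ‖y‖) • y


lemma rproj_norm (hM : 0 < M) (y : H) : ‖rproj M y‖ ≤ M := by
  have hm : 0 < max M ‖y‖ := lt_max_of_lt_left hM
  rw [rproj, norm_smul, Real.norm_of_nonneg (by positivity), div_mul_eq_mul_div, div_le_iff₀ hm]
  have := le_max_right M ‖y‖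
  gcongr

lemma rproj_of_le (hM : 0 < M) {y : H} (hy : ‖y‖ ≤ M) : rproj M y = y := by
  rw [rproj, max_eq_left hy, div_self hM.ne', one_smul]

lemma rproj_cont (hM : 0 < M) : Continuous (rproj M : H → H) := by
  unfold rproj
  refine Continuous.smul (Continuous.div continuous_const (by fun_prop) ?_) continuous_id
  intro y
  exact (lt_max_of_lt_left hM).ne'

lemma rproj_dist (hM : 0 < M) {x : H} (hx : ‖x‖ ≤ M) (y : H) :
    ‖x - rproj M y‖ ^ 2 ≤ ‖x - y‖ ^ 2 := by
  rcases le_total ‖y‖ M with h | h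
  · rw [rproj_of_le hM h]
  · have hy : 0 < ‖y‖ := hM.trans_le h
    rw [rproj, max_eq_right h]
    set s := M / ‖y‖ with hs
    have hs1 : s ≤ 1 := by rw [hs, div_le_one hy]; exact h
    have hs0 : 0 < s := by positivity
    have hsy : s * ‖y‖ = M := by rw [hs]; field_simp
    rw [norm_sub_sq_real, norm_sub_sq_real, inner_smul_right, norm_smul,
      Real.norm_of_nonneg hs0.le]
    have h1 : inner ℝ x y ≤ M * ‖y‖ := (real_inner_le_norm x y).trans (by gcongr)
    have h2 : (1 - s) * inner ℝ x y ≤ (1 - s) * (M * ‖y‖) :=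
      mul_le_mul_of_nonneg_left h1 (by linarith)
    have h3 : (1 - s) * (M * ‖y‖) * 2 ≤ ‖y‖ ^ 2 - M ^ 2 := by
      have : (1 - s) * (M * ‖y‖) = M * ‖y‖ - M * M := by rw [← hsy]; ring
      rw [this]
      nlinarith [sq_nonneg (‖y‖ - M)]
    rw [hsy]
    nlinarith

lemma qrisk_rproj (hk : 2 ≤ k) (hb : mbounded P M) (hM : 0 < M) (c : Fin k → H) :
    qrisk k P (fun i => rproj M (c i)) ≤ qrisk k P c := by
  have := qrisk_le_add hk hb c (fun i => rproj M (c i)) 0 fun x hx j =>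
    ⟨j, by simpa using rproj_dist hM hx (c j)⟩
  simpa using this

/-- weak sequential compactness -/
lemma weak_subseq [CompleteSpace H] (hM : 0 < M) (u : ℕ → H) (hu : ∀ n, ‖u n‖ ≤ M) :
    ∃ y : H, ∃ φ : ℕ → ℕ, StrictMono φ ∧ ‖y‖ ≤ M ∧
      ∀ x, Tendsto (fun n => inner ℝ x (u (φ n))) atTop (𝓝 (inner ℝ x y)) := by
  have hc := WeakDual.isSeqCompact_closedBall ℝ H (0 : StrongDual ℝ H) M
  let v : ℕ → WeakDual ℝ H := fun n => StrongDual.toWeakDual (InnerProductSpace.toDual ℝ H (u n))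
  have hv : ∀ n, v n ∈ WeakDual.toStrongDual ⁻¹' Metric.closedBall (0 : StrongDual ℝ H) M := by
    intro n
    simp only [Set.mem_preimage, mem_closedBall, dist_zero_right]
    change ‖InnerProductSpace.toDual ℝ H (u n)‖ ≤ M
    simpa using hu n
  obtain ⟨a, ha, φ, hφ, hlim⟩ := hc hv
  refine ⟨(InnerProductSpace.toDual ℝ H).symm (WeakDual.toStrongDual a), φ, hφ, ?_, ?_⟩
  · simpa using ha
  · intro x
    have h1 : Tendsto (fun n => v (φ n) x) atTop (𝓝 (a x)) :=
      ((WeakDual.eval_continuous x).tendsto a).comp hlim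
    have h2 : ∀ n, v (φ n) x = inner ℝ x (u (φ n)) := by
      intro n
      rw [real_inner_comm]
      rfl
    have h3 : a x = inner ℝ x ((InnerProductSpace.toDual ℝ H).symm (WeakDual.toStrongDual a)) := by
      rw [real_inner_comm, InnerProductSpace.toDual_symm_apply]
      rfl
    rw [← h3]
    simpa [h2] using h1

lemma weak_subseq_pi [CompleteSpace H] (hM : 0 < M) (u : ℕ → Fin k → H)
    (hu : ∀ n i, ‖u n i‖ ≤ M) :
    ∃ y : Fin k → H, ∃ φ : ℕ → ℕ, StrictMono φ ∧ (∀ i, ‖y i‖ ≤ M) ∧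
      ∀ i x, Tendsto (fun n => inner ℝ x (u (φ n) i)) atTop (𝓝 (inner ℝ x (y i))) := by
  have key : ∀ s : Finset (Fin k), ∃ φ : ℕ → ℕ, StrictMono φ ∧ ∀ i ∈ s, ∃ y : H, ‖y‖ ≤ M ∧
      ∀ x, Tendsto (fun n => inner ℝ x (u (φ n) i)) atTop (𝓝 (inner ℝ x y)) := by
    intro s
    induction s using Finset.induction_on with
    | empty => exact ⟨id, strictMono_id, by simp⟩
    | insert a s ha ih =>
      obtain ⟨φ, hφ, h⟩ := ih
      obtain ⟨y, ψ, hψ, hy, hl⟩ := weak_subseq hM (fun n => u (φ n) a) (fun n => hu _ _)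
      refine ⟨φ ∘ ψ, hφ.comp hψ, ?_⟩
      intro i hi
      rcases Finset.mem_insert.1 hi with rfl | hi
      · exact ⟨y, hy, hl⟩
      · obtain ⟨z, hz, hzl⟩ := h i hi
        exact ⟨z, hz, fun x => (hzl x).comp hψ.tendsto_atTop⟩
  obtain ⟨φ, hφ, h⟩ := key Finset.univ
  choose y hy hl using fun i => h i (Finset.mem_univ i)
  exact ⟨y, φ, hφ, hy, hl⟩

lemma qrisk_le_add_int (hk : 2 ≤ k) (hb : mbounded P M) (c c' : Fin k → H) (g : H → ℝ)
    (hg : Integrable g P)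
    (h : ∀ x, ‖x‖ ≤ M → qgamma k c' x ≤ qgamma k c x + g x) :
    qrisk k P c' ≤ qrisk k P c + ∫ x, g x ∂P := by
  have h1 : qrisk k P c + ∫ x, g x ∂P = ∫ x, (qgamma k c x + g x) ∂P := by
    rw [integral_add (integrable_qgamma hk hb c) hg]
    rfl
  rw [h1]
  refine integral_mono_ae (integrable_qgamma hk hb c')
    ((integrable_qgamma hk hb c).add hg) ?_
  filter_upwards [ae_ball hb] with x hx
  exact h x hx

/-- Weak limits and control of the risk along the segments to the weak limit. -/
lemma weak_path [CompleteSpace H] (hk : 2 ≤ k) (hb : mbounded P M) (hM : 0 < M)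
    (u : ℕ → Fin k → H) (hu : ∀ n i, ‖u n i‖ ≤ M) :
    ∃ y : Fin k → H, ∃ φ : ℕ → ℕ, ∃ δ : ℕ → ℝ, StrictMono φ ∧ (∀ i, ‖y i‖ ≤ M) ∧
      (∀ i x, Tendsto (fun n => inner ℝ x (u (φ n) i)) atTop (𝓝 (inner ℝ x (y i)))) ∧
      Tendsto δ atTop (𝓝 0) ∧
      ∀ n, ∀ t : ℝ, 0 ≤ t → t ≤ 1 →
        qrisk k P (fun i => u (φ n) i + t • (y i - u (φ n) i)) ≤ qrisk k P (u (φ n)) + δ n := by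
  obtain ⟨y, φ, hφ, hy, hl⟩ := weak_subseq_pi hM u hu
  let g : ℕ → H → ℝ := fun n x => ∑ i, 2 * |inner ℝ (x - y i) (u (φ n) i - y i)|
  have hgc : ∀ n, Continuous (g n) := by
    intro n
    refine continuous_finset_sum _ fun i _ => ?_
    exact continuous_const.mul (continuous_abs.comp (by fun_prop))
  have hgb : ∀ n x, ‖x‖ ≤ M → |g n x| ≤ ∑ i : Fin k, 2 * ((2 * M) * (2 * M)) := by
    intro n x hx
    have h0 : 0 ≤ g n x := Finset.sum_nonneg fun i _ => by positivity
    rw [abs_of_nonneg h0]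
    refine Finset.sum_le_sum fun i _ => ?_
    have h1 := abs_real_inner_le_norm (x - y i) (u (φ n) i - y i)
    have h2 : ‖x - y i‖ ≤ 2 * M := by linarith [norm_sub_le x (y i), hy i]
    have h3 : ‖u (φ n) i - y i‖ ≤ 2 * M := by
      linarith [norm_sub_le (u (φ n) i) (y i), hy i, hu (φ n) i]
    have h4 : ‖x - y i‖ * ‖u (φ n) i - y i‖ ≤ (2 * M) * (2 * M) := by gcongr
    linarith
  have hgi : ∀ n, Integrable (g n) P := fun n => integrable_of_cont hb (hgc n) _ (hgb n)
  refine ⟨y, φ, fun n => ∫ x, g n x ∂P, hφ, hy, hl, ?_, ?_⟩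
  · have := tendsto_integral_of_dominated_convergence (μ := P) (F := g) (f := fun _ => (0 : ℝ))
      (fun _ => ∑ i : Fin k, 2 * ((2 * M) * (2 * M))) (fun n => (hgc n).aestronglyMeasurable)
      (integrable_const _) (fun n => by
        filter_upwards [ae_ball hb] with x hx
        exact hgb n x hx) (by
        refine Filter.Eventually.of_forall fun x => ?_
        have h1 : ∀ i : Fin k, Tendsto (fun n => 2 * |inner ℝ (x - y i) (u (φ n) i - y i)|) atTop
            (𝓝 0) := by
          intro i
          have h2 := ((hl i (x - y i)).sub_const (inner ℝ (x - y i) (y i))).abs.const_mul 2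
          simpa [inner_sub_right] using h2
        have h3 := tendsto_finset_sum (Finset.univ) fun i _ => h1 i
        simpa [g] using h3)
    simpa using this
  · intro n t ht0 ht1
    refine qrisk_le_add_int hk hb _ _ _ (hgi n) ?_
    intro x hx
    obtain ⟨j, hj⟩ := qgamma_exists hk (u (φ n)) x
    have h1 := qgamma_le (fun i => u (φ n) i + t • (y i - u (φ n) i)) x j
    have h2 : 2 * |inner ℝ (x - y j) (u (φ n) j - y j)| ≤ g n x :=
      Finset.single_le_sum (f := fun i => 2 * |inner ℝ (x - y i) (u (φ n) i - y i)|)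
        (fun i _ => by positivity) (Finset.mem_univ j)
    have h3 : ‖x - (u (φ n) j + t • (y j - u (φ n) j))‖ ^ 2 ≤
        ‖x - u (φ n) j‖ ^ 2 + 2 * |inner ℝ (x - y j) (u (φ n) j - y j)| := by
      have e1 : x - (u (φ n) j + t • (y j - u (φ n) j)) =
          (x - y j) - (1 - t) • (u (φ n) j - y j) := by module
      have e2 : x - u (φ n) j = (x - y j) - (u (φ n) j - y j) := by module
      rw [e1, e2, norm_sub_sq_real (x - y j), norm_sub_sq_real (x - y j), inner_smul_right,
        norm_smul, Real.norm_of_nonneg (by linarith : (0 : ℝ) ≤ 1 - t)]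
      set a := inner ℝ (x - y j) (u (φ n) j - y j)
      have := le_abs_self a
      have h5 := abs_nonneg a
      have h6 : t * a ≤ |a| := by nlinarith
      have h7 : ((1 - t) * ‖u (φ n) j - y j‖) ^ 2 ≤ ‖u (φ n) j - y j‖ ^ 2 := by
        have h8 := norm_nonneg (u (φ n) j - y j)
        gcongr
        nlinarith
      linarith
    linarith [hj]

/-- Optimal codebooks have pairwise distinct code points. -/
lemma injective_of_opt (hk : 2 ≤ k) (hb : mbounded P M) (hsupp : suppGT P k) {c : Fin k → H}
    (hc : c ∈ qopt k P) {i j : Fin k} (hij : i ≠ j) : c i ≠ c j := by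
  intro heq
  classical
  have hS := hsupp (Finset.univ.image c) (Finset.card_image_le.trans (by simp))
  obtain ⟨x0, hx0S, hx0⟩ := Measure.nonempty_inter_support_of_pos (pos_iff_ne_zero.2 hS)
  have hne : ∀ l, x0 ≠ c l := by
    intro l h
    apply hx0S
    simp [h]
  obtain ⟨l, hl⟩ := qgamma_exists hk c x0
  set d := ‖x0 - c l‖ with hd
  have hdpos : 0 < d := norm_pos_iff.2 (sub_ne_zero.2 (hne l))
  have hall : ∀ m, d ≤ ‖x0 - c m‖ := mem_vcell_of_eq hl
  let c' := Function.update c i x0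
  have hle : ∀ x, qgamma k c' x ≤ qgamma k c x := by
    intro x
    obtain ⟨m, hm⟩ := qgamma_exists hk c x
    rw [hm]
    by_cases hmi : m = i
    · have := qgamma_le c' x j
      simp only [c', Function.update_of_ne hij.symm] at this
      rw [hmi, heq]
      exact this
    · have := qgamma_le c' x m
      simpa only [c', Function.update_of_ne hmi] using this
  have hlt : ∀ x ∈ ball x0 (d / 3), qgamma k c' x < qgamma k c x := by
    intro x hx
    have hx' : ‖x - x0‖ < d / 3 := by simpa [dist_eq_norm] using hx
    obtain ⟨m, hm⟩ := qgamma_exists hk c x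
    have h1 := qgamma_le c' x i
    simp only [c', Function.update_self] at h1
    have h2 : d ≤ ‖x - x0‖ + ‖x - c m‖ := by
      have h3 := norm_sub_le (x - c m) (x - x0)
      have h4 := hall m
      have h5 : x - c m - (x - x0) = x0 - c m := by abel
      rw [h5] at h3
      linarith
    rw [hm]
    have h6 : ‖x - x0‖ < ‖x - c m‖ := by linarith
    have h7 : ‖x - x0‖ ^ 2 < ‖x - c m‖ ^ 2 := by
      have := norm_nonneg (x - x0)
      gcongr
    exact lt_of_le_of_lt h1 h7
  have hpos : 0 < ∫ x, (qgamma k c x - qgamma k c' x) ∂P := by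
    rw [integral_pos_iff_support_of_nonneg (fun x => sub_nonneg.2 (hle x))
      ((integrable_qgamma hk hb c).sub (integrable_qgamma hk hb c'))]
    have hball : 0 < P (ball x0 (d / 3)) :=
      (Measure.mem_support_iff_forall x0).1 hx0 _ (ball_mem_nhds _ (by positivity))
    refine hball.trans_le (measure_mono ?_)
    intro x hx
    have := hlt x hx
    simp only [Function.mem_support]
    linarith
  rw [integral_sub (integrable_qgamma hk hb c) (integrable_qgamma hk hb c')] at hpos
  have := hc c'
  simp only [qrisk] at this
  linarith

/-- Codebooks with a repeated point are uniformly suboptimal. -/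
lemma gap_pair [CompleteSpace H] (hk : 2 ≤ k) (hb : mbounded P M) (hM : 0 < M)
    (hsupp : suppGT P k) {cs : Fin k → H} (hcs : cs ∈ qopt k P) {i j : Fin k} (hij : i ≠ j) :
    ∃ η > 0, ∀ c : Fin k → H, (∀ l, ‖c l‖ ≤ M) → c i = c j →
      qrisk k P cs + η ≤ qrisk k P c := by
  by_contra hcon
  push Not at hcon
  choose u hu hue hur using fun n : ℕ => hcon (1 / ((n : ℝ) + 1)) (by positivity)
  obtain ⟨y, φ, δ, hφ, hy, hl, hδ, hR⟩ := weak_path hk hb hM u hu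
  have hyij : y i = y j := by
    refine ext_inner_left ℝ fun x => ?_
    refine tendsto_nhds_unique (hl i x) ?_
    simpa [hue] using hl j x
  have hle : qrisk k P y ≤ qrisk k P cs := by
    have h1 : ∀ n, qrisk k P y ≤ qrisk k P cs + 1 / (((φ n : ℕ) : ℝ) + 1) + δ n := by
      intro n
      have := hR n 1 zero_le_one le_rfl
      have h2 := hur (φ n)
      simp only [one_smul, add_sub_cancel] at this
      change qrisk k P y ≤ _ at this
      linarith
    have h3 : Tendsto (fun n => qrisk k P cs + 1 / (((φ n : ℕ) : ℝ) + 1) + δ n) atTop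
        (𝓝 (qrisk k P cs + 0 + 0)) :=
      ((tendsto_one_div_add_atTop_nhds_zero_nat.comp hφ.tendsto_atTop).const_add _).add hδ
    have := ge_of_tendsto' h3 h1
    simpa using this
  have hyopt : y ∈ qopt k P := fun c' => hle.trans (hcs c')
  exact injective_of_opt hk hb hsupp hyopt hij hyij

lemma gap [CompleteSpace H] (hk : 2 ≤ k) (hb : mbounded P M) (hM : 0 < M)
    (hsupp : suppGT P k) {cs : Fin k → H} (hcs : cs ∈ qopt k P) :
    ∃ η > 0, ∀ c : Fin k → H, (∀ l, ‖c l‖ ≤ M) → ∀ i j, i ≠ j → c i = c j →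
      qrisk k P cs + η ≤ qrisk k P c := by
  have h : ∀ p : Fin k × Fin k, ∃ η > 0, p.1 ≠ p.2 → ∀ c : Fin k → H, (∀ l, ‖c l‖ ≤ M) →
      c p.1 = c p.2 → qrisk k P cs + η ≤ qrisk k P c := by
    intro p
    by_cases hp : p.1 = p.2
    · exact ⟨1, one_pos, fun h => absurd hp h⟩
    · obtain ⟨η, h1, h2⟩ := gap_pair hk hb hM hsupp hcs hp
      exact ⟨η, h1, fun _ => h2⟩
  choose η hη h using h
  haveI : Nonempty (Fin k × Fin k) := ⟨(⟨0, by omega⟩, ⟨0, by omega⟩)⟩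
  obtain ⟨p, hp⟩ := Finite.exists_min η
  refine ⟨η p, hη p, fun c hc i j hij he => ?_⟩
  have := h (i, j) hij c hc he
  have := hp (i, j)
  linarith

lemma vcell_closed (c : Fin k → H) (i : Fin k) : IsClosed (vcell k c i) := by
  have : vcell k c i = ⋂ j, {x | ‖x - c i‖ ≤ ‖x - c j‖} := by
    ext x; simp [vcell]
  rw [this]
  exact isClosed_iInter fun j => isClosed_le (by fun_prop) (by fun_prop)

/-- Effect of moving one code point. -/
lemma qrisk_update (hk : 2 ≤ k) (hb : mbounded P M) (c : Fin k → H) (i : Fin k) (y : H) :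
    qrisk k P (Function.update c i y) ≤
      qrisk k P c + ∫ x in vcell k c i, (‖x - y‖ ^ 2 - ‖x - c i‖ ^ 2) ∂P := by
  rw [← integral_indicator (vcell_closed c i).measurableSet]
  refine qrisk_le_add_int hk hb _ _ _
    (((integrable_sq hb y).sub (integrable_sq hb (c i))).indicator
      (vcell_closed c i).measurableSet) ?_
  intro x hx
  by_cases hxi : x ∈ vcell k c i
  · rw [Set.indicator_of_mem hxi, qgamma_of_mem hk hxi]
    have := qgamma_le (Function.update c i y) x i
    simp only [Function.update_self] at this
    linarith
  · rw [Set.indicator_of_notMem hxi]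
    obtain ⟨m, hm⟩ := qgamma_exists hk c x
    have hmi : m ≠ i := by
      rintro rfl
      exact hxi (mem_vcell_of_eq hm)
    have := qgamma_le (Function.update c i y) x m
    rw [Function.update_of_ne hmi] at this
    linarith

lemma exists_ne_fin (hk : 2 ≤ k) (i : Fin k) : ∃ j : Fin k, j ≠ i := by
  haveI : Nontrivial (Fin k) := Fin.nontrivial_iff_two_le.2 hk
  exact exists_ne i

lemma vcell_pos (hk : 2 ≤ k) (hb : mbounded P M) (hsupp : suppGT P k) {c : Fin k → H}
    (hc : c ∈ qopt k P) (i : Fin k) : 0 < P.real (vcell k c i) := by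
  rcases measureReal_nonneg.lt_or_eq (a := (0 : ℝ)) (b := P.real (vcell k c i)) with h | h
  · exact h
  exfalso
  have h0 : P (vcell k c i) = 0 := by
    rw [Measure.real, eq_comm, ENNReal.toReal_eq_zero_iff] at h
    exact h.resolve_right (measure_ne_top _ _)
  obtain ⟨j, hj⟩ := exists_ne_fin hk i
  have h1 := qrisk_update hk hb c i (c j)
  rw [setIntegral_measure_zero _ h0, add_zero] at h1
  have h2 : Function.update c i (c j) ∈ qopt k P := fun c' => h1.trans (hc c')
  refine injective_of_opt hk hb hsupp h2 hj ?_
  simp [Function.update_of_ne hj]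

lemma integrable_id' (hb : mbounded P M) : Integrable (fun x : H => x) P := by
  refine Integrable.of_bound continuous_id.aestronglyMeasurable M ?_
  exact ae_ball hb

/-- Centroid condition. -/
lemma centroid [CompleteSpace H] (hk : 2 ≤ k) (hb : mbounded P M) (hsupp : suppGT P k)
    {c : Fin k → H} (hc : c ∈ qopt k P) (i : Fin k) :
    ∫ x in vcell k c i, (x - c i) ∂P = 0 := by
  set w := ∫ x in vcell k c i, (x - c i) ∂P with hw
  have hm := vcell_pos hk hb hsupp hc i
  set m := P.real (vcell k c i) with hmdef
  have h1 := qrisk_update hk hb c i (c i + m⁻¹ • w)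
  have h2 := hc (Function.update c i (c i + m⁻¹ • w))
  have hint : Integrable (fun x => x - c i) (P.restrict (vcell k c i)) :=
    ((integrable_id' hb).sub (integrable_const _)).restrict
  have h3 : ∫ x in vcell k c i, (‖x - (c i + m⁻¹ • w)‖ ^ 2 - ‖x - c i‖ ^ 2) ∂P =
      - (m⁻¹ * ‖w‖ ^ 2) := by
    have e1 : ∀ x, ‖x - (c i + m⁻¹ • w)‖ ^ 2 - ‖x - c i‖ ^ 2 =
        ‖m⁻¹ • w‖ ^ 2 - 2 * (m⁻¹ * inner ℝ w (x - c i)) := by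
      intro x
      rw [← sub_sub, norm_sub_sq_real, inner_smul_right, real_inner_comm]
      ring
    simp_rw [e1]
    rw [integral_sub (integrable_const _) (((hint.const_inner w).const_mul _).const_mul _),
      integral_const_mul, integral_const_mul, integral_inner hint, ← hw, setIntegral_const,
      real_inner_self_eq_norm_sq, norm_smul, Real.norm_of_nonneg (by positivity), ← hmdef,
      smul_eq_mul]
    field_simp
    ring
  rw [h3] at h1
  have h4 : m⁻¹ * ‖w‖ ^ 2 ≤ 0 := by linarith
  have h5 : ‖w‖ ^ 2 ≤ 0 := by
    by_contra hh
    push Not at hh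
    have : 0 < m⁻¹ * ‖w‖ ^ 2 := by positivity
    linarith
  have h6 : ‖w‖ = 0 := by nlinarith [norm_nonneg w]
  exact norm_eq_zero.1 h6

lemma opt_ball [CompleteSpace H] (hk : 2 ≤ k) (hb : mbounded P M) (hsupp : suppGT P k)
    {c : Fin k → H} (hc : c ∈ qopt k P) (i : Fin k) : ‖c i‖ ≤ M := by
  have h := centroid hk hb hsupp hc i
  have hm := vcell_pos hk hb hsupp hc i
  rw [integral_sub (integrable_id' hb).restrict (integrable_const _), setIntegral_const,
    sub_eq_zero] at h
  have h1 : ‖∫ x in vcell k c i, x ∂P‖ ≤ M * P.real (vcell k c i) := by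
    refine norm_setIntegral_le_of_norm_le_const_ae (measure_lt_top _ _) ?_
    exact ae_restrict_of_ae (ae_ball hb)
  rw [h, norm_smul, Real.norm_of_nonneg hm.le] at h1
  nlinarith

lemma qB_le {c : Fin k → H} (hc : c ∈ qopt k P) {i j : Fin k} (hij : i ≠ j) :
    qB k P ≤ ‖c i - c j‖ := by
  refine csInf_le ⟨0, ?_⟩ ⟨c, hc, i, j, hij, rfl⟩
  rintro _ ⟨c, _, i, j, _, rfl⟩
  exact norm_nonneg _

lemma qpmin_le {c : Fin k → H} (hc : c ∈ qopt k P) (i : Fin k) :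
    qpmin k P ≤ P.real (vcell k c i) := by
  refine csInf_le ⟨0, ?_⟩ ⟨c, hc, i, rfl⟩
  rintro _ ⟨c, _, i, rfl⟩
  exact ENNReal.toReal_nonneg

lemma le_pweight {c : Fin k → H} (hc : c ∈ qopt k P) (t : ℝ) :
    P.real (cthickening t (nbd k c)) ≤ pweight k P t := by
  refine le_csSup ⟨1, ?_⟩ ⟨c, hc, rfl⟩
  rintro _ ⟨c, _, rfl⟩
  exact measureReal_le_one

lemma qB_pos [CompleteSpace H] (hk : 2 ≤ k) (hb : mbounded P M) (hM : 0 < M)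
    (hsupp : suppGT P k) (hne : (qopt k P).Nonempty) : 0 < qB k P := by
  obtain ⟨cs, hcs⟩ := hne
  obtain ⟨η, hη, h⟩ := gap hk hb hM hsupp hcs
  have h1 : η / (4 * M) ≤ qB k P := by
    refine le_csInf ?_ ?_
    · obtain ⟨j, hj⟩ := exists_ne_fin hk ⟨0, by omega⟩
      exact ⟨_, cs, hcs, _, _, hj, rfl⟩
    · rintro _ ⟨c, hc, i, j, hij, rfl⟩
      have hcb := opt_ball hk hb hsupp hc
      have hb' : ∀ l, ‖Function.update c i (c j) l‖ ≤ M := by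
        intro l
        by_cases hl : l = i
        · subst hl; simpa using hcb j
        · simpa [Function.update_of_ne hl] using hcb l
      have h2 := h (Function.update c i (c j)) hb' j i hij.symm
        (by simp [Function.update_of_ne hij.symm])
      have h3 := qrisk_lip hk hb c (Function.update c i (c j)) ‖c i - c j‖ hcb hb' (by
        intro l
        by_cases hl : l = i
        · subst hl; simp [norm_sub_rev]
        · simp [Function.update_of_ne hl]) hM
      have h4 := hc cs
      rw [div_le_iff₀ (by positivity)]
      linarith
  exact lt_of_lt_of_le (by positivity) h1

lemma qpmin_pos [CompleteSpace H] (hk : 2 ≤ k) (hb : mbounded P M) (hM : 0 < M)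
    (hsupp : suppGT P k) (hne : (qopt k P).Nonempty) : 0 < qpmin k P := by
  obtain ⟨cs, hcs⟩ := hne
  obtain ⟨η, hη, h⟩ := gap hk hb hM hsupp hcs
  have h1 : η / (4 * M ^ 2) ≤ qpmin k P := by
    refine le_csInf ?_ ?_
    · exact ⟨_, cs, hcs, ⟨0, by omega⟩, rfl⟩
    · rintro _ ⟨c, hc, i, rfl⟩
      obtain ⟨j, hij⟩ := exists_ne_fin hk i
      have hcb := opt_ball hk hb hsupp hc
      have hb' : ∀ l, ‖Function.update c i (c j) l‖ ≤ M := by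
        intro l
        by_cases hl : l = i
        · subst hl; simpa using hcb j
        · simpa [Function.update_of_ne hl] using hcb l
      have h2 := h (Function.update c i (c j)) hb' j i hij
        (by simp [Function.update_of_ne hij])
      have h3 := qrisk_update hk hb c i (c j)
      have h4 := hc cs
      have h5 : ‖∫ x in vcell k c i, (‖x - c j‖ ^ 2 - ‖x - c i‖ ^ 2) ∂P‖ ≤
          (4 * M ^ 2) * P.real (vcell k c i) := by
        refine norm_setIntegral_le_of_norm_le_const_ae (measure_lt_top _ _) ?_
        refine ae_restrict_of_ae ?_
        filter_upwards [ae_ball hb] with x hx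
        have e1 : ‖x - c j‖ ≤ 2 * M := by linarith [norm_sub_le x (c j), hcb j]
        have e2 : ‖x - c i‖ ≤ 2 * M := by linarith [norm_sub_le x (c i), hcb i]
        rw [Real.norm_eq_abs, abs_le]
        constructor <;> nlinarith [norm_nonneg (x - c j), norm_nonneg (x - c i)]
      have h6 := (le_abs_self _).trans h5
      rw [div_le_iff₀ (by positivity)]
      change η ≤ P.real (vcell k c i) * (4 * M ^ 2)
      linarith
  exact lt_of_lt_of_le (by positivity) h1

/-- A point of the cell `i` which is nearly as close to `c j` is near the boundary. -/
lemma near_nbd (c : Fin k → H) {i j : Fin k} (hij : i ≠ j) (hne : c i ≠ c j) {x : H}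
    (hx : x ∈ vcell k c i) :
    ∃ y ∈ nbd k c, ‖x - y‖ ≤ (‖x - c j‖ ^ 2 - ‖x - c i‖ ^ 2) / (2 * ‖c i - c j‖) := by
  classical
  set L := ‖c i - c j‖ with hL
  have hLpos : 0 < L := norm_pos_iff.2 (sub_ne_zero.2 hne)
  set T := (‖x - c j‖ ^ 2 - ‖x - c i‖ ^ 2) / (2 * L ^ 2) with hT
  have hT0 : 0 ≤ T := by
    have h1 := hx j
    have : ‖x - c i‖ ^ 2 ≤ ‖x - c j‖ ^ 2 := by gcongr
    apply div_nonneg <;> nlinarith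
  have hs : (Finset.univ.erase i).Nonempty := ⟨j, by simp [hij.symm]⟩
  let Y : ℝ → H := fun s => x + s • (c j - c i)
  let f : ℝ → ℝ := fun s => (Finset.univ.erase i).inf' hs
    (fun l => ‖Y s - c l‖ - ‖Y s - c i‖)
  have hf : Continuous f := by
    refine Continuous.finset_inf'_apply _ fun l _ => ?_
    simp only [Y]
    fun_prop
  have hf0 : 0 ≤ f 0 := by
    refine Finset.le_inf' _ _ fun l _ => ?_
    simpa [Y] using hx l
  have hfT : f T ≤ 0 := by
    refine (Finset.inf'_le _ (show j ∈ Finset.univ.erase i by simp [hij.symm])).trans ?_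
    have h1 : ‖Y T - c j‖ ^ 2 = ‖Y T - c i‖ ^ 2 := by
      have e1 : ∀ z, ‖Y T - z‖ ^ 2 = ‖x - z‖ ^ 2 + 2 * (T * inner ℝ (x - z) (c j - c i)) +
          ‖T • (c j - c i)‖ ^ 2 := by
        intro z
        have : Y T - z = (x - z) + T • (c j - c i) := by simp only [Y]; abel
        rw [this, norm_add_sq_real, inner_smul_right]
      have e2 : inner ℝ (x - c i) (c j - c i) - inner ℝ (x - c j) (c j - c i) = L ^ 2 := by
        rw [← inner_sub_left]
        have : x - c i - (x - c j) = c j - c i := by abel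
        rw [this, real_inner_self_eq_norm_sq, norm_sub_rev]
      have e3 : T * (2 * L ^ 2) = ‖x - c j‖ ^ 2 - ‖x - c i‖ ^ 2 := by
        rw [hT]; field_simp
      rw [e1, e1]
      have e4 : inner ℝ (x - c i) (c j - c i) = inner ℝ (x - c j) (c j - c i) + L ^ 2 := by
        linarith
      rw [e4]
      linarith
    have h2 : ‖Y T - c j‖ ≤ ‖Y T - c i‖ := le_of_sq_le_sq h1.le (norm_nonneg _)
    linarith
  obtain ⟨s, ⟨hs0, hsT⟩, hfs⟩ := intermediate_value_Icc' hT0 hf.continuousOn ⟨hfT, hf0⟩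
  have hcell : Y s ∈ vcell k c i := by
    intro l
    by_cases hl : l = i
    · rw [hl]
    · have := Finset.inf'_le (fun l => ‖Y s - c l‖ - ‖Y s - c i‖)
        (show l ∈ Finset.univ.erase i by simp [hl])
      change f s ≤ _ at this
      rw [hfs] at this
      linarith
  obtain ⟨l, hl, hle⟩ := Finset.exists_mem_eq_inf' hs (fun l => ‖Y s - c l‖ - ‖Y s - c i‖)
  change f s = _ at hle
  rw [hfs] at hle
  have hli : l ≠ i := (Finset.mem_erase.1 hl).1
  refine ⟨Y s, ?_, ?_⟩
  · simp only [nbd, Set.mem_iUnion]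
    refine ⟨i, l, hli.symm, hcell, ?_⟩
    intro m
    have := hcell m
    linarith
  · have e1 : x - Y s = -(s • (c j - c i)) := by simp only [Y]; abel
    rw [e1, norm_neg, norm_smul, Real.norm_of_nonneg hs0, norm_sub_rev, ← hL]
    have e2 : (‖x - c j‖ ^ 2 - ‖x - c i‖ ^ 2) / (2 * L) = T * L := by
      rw [hT]; field_simp
    rw [e2]
    gcongr

/-- Local quadratic lower bound on the excess risk. -/
lemma local_bound [CompleteSpace H] (hk : 2 ≤ k) (hM : 0 < M)
    (hsupp : suppGT P k) {r0 : ℝ} (hmargin : margin k P M r0) {c cs : Fin k → H}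
    (hcs : cs ∈ qopt k P) (hc : ∀ i, ‖c i‖ ≤ M) {d : ℝ} (hd0 : 0 ≤ d)
    (hd : ∑ i, ‖c i - cs i‖ ^ 2 = d ^ 2) (hdr : 4 * M * d ≤ qB k P * r0) :
    qpmin k P / 2 * d ^ 2 ≤ qrisk k P c - qrisk k P cs := by
  obtain ⟨hr0, hb, hp⟩ := hmargin
  have hB := qB_pos hk hb hM hsupp ⟨cs, hcs⟩
  have hpm := qpmin_pos hk hb hM hsupp ⟨cs, hcs⟩
  have hcsb := opt_ball hk hb hsupp hcs
  set B := qB k P with hBdef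
  set p := qpmin k P with hpdef
  set t := 4 * M * d / B with ht
  have ht0 : 0 ≤ t := by positivity
  have htr : t ≤ r0 := by rw [ht, div_le_iff₀ hB]; linarith
  have hdi : ∀ i, ‖c i - cs i‖ ≤ d := by
    intro i
    have h1 : ‖c i - cs i‖ ^ 2 ≤ d ^ 2 := by
      rw [← hd]
      exact Finset.single_le_sum (f := fun i => ‖c i - cs i‖ ^ 2)
        (fun i _ => by positivity) (Finset.mem_univ i)
    exact le_of_sq_le_sq h1 hd0
  -- boundary is null
  have hN0 : P (nbd k cs) = 0 := by
    have h1 := (le_pweight hcs 0).trans (hp 0 le_rfl hr0.le)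
    simp only [mul_zero, zero_div] at h1
    have h2 : P.real (cthickening 0 (nbd k cs)) = 0 := le_antisymm h1 measureReal_nonneg
    rw [measureReal_eq_zero_iff] at h2
    exact measure_mono_null (self_subset_cthickening _) h2
  have haeN : ∀ᵐ x ∂P, x ∉ nbd k cs := measure_eq_zero_iff_ae_notMem.1 hN0
  set K := cthickening t (nbd k cs) with hK
  have hKm : MeasurableSet K := isClosed_cthickening.measurableSet
  let F : Fin k → H → ℝ := fun i =>
    (vcell k cs i).indicator (fun x => ‖x - c i‖ ^ 2 - ‖x - cs i‖ ^ 2)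
  have hFi : ∀ i, Integrable (F i) P := fun i =>
    ((integrable_sq hb (c i)).sub (integrable_sq hb (cs i))).indicator
      (vcell_closed cs i).measurableSet
  let G : H → ℝ := K.indicator (fun _ => 8 * M * d)
  have hGi : Integrable G P := (integrable_const _).indicator hKm
  have hpt : ∀ᵐ x ∂P, ∑ i, F i x - G x ≤ qgamma k c x - qgamma k cs x := by
    filter_upwards [ae_ball hb, haeN] with x hx hxN
    obtain ⟨i, hi⟩ := qgamma_exists hk cs x
    have hxi := mem_vcell_of_eq hi
    have hother : ∀ l, l ≠ i → F l x = 0 := by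
      intro l hl
      refine Set.indicator_of_notMem ?_ _
      intro hxl
      apply hxN
      simp only [nbd, Set.mem_iUnion]
      exact ⟨l, i, hl, hxl, hxi⟩
    rw [Finset.sum_eq_single i (fun l _ hl => hother l hl) (by simp)]
    have hFx : F i x = ‖x - c i‖ ^ 2 - ‖x - cs i‖ ^ 2 := Set.indicator_of_mem hxi _
    rw [hFx, hi]
    have hG0 : 0 ≤ G x := Set.indicator_nonneg (fun _ _ => by positivity) x
    obtain ⟨j, hj⟩ := qgamma_exists hk c x
    rw [hj]
    by_cases hij : i = j
    · subst hij
      linarith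
    · have hji : ‖x - c j‖ ^ 2 ≤ ‖x - c i‖ ^ 2 := by
        rw [← hj]; exact qgamma_le c x i
      have hsij : ‖x - cs i‖ ^ 2 ≤ ‖x - cs j‖ ^ 2 := by
        rw [← hi]; exact qgamma_le cs x j
      have b1 := sq_diff_le hx (hc i) (hcsb i)
      have b2 := sq_diff_le hx (hcsb j) (hc j)
      have b3 := hdi i
      have b4 := hdi j
      rw [norm_sub_rev] at b4
      have b5 : 4 * M * ‖c i - cs i‖ ≤ 4 * M * d := by gcongr
      have b6 : 4 * M * ‖cs j - c j‖ ≤ 4 * M * d := by gcongr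
      have hxK : x ∈ K := by
        obtain ⟨y, hy, hxy⟩ := near_nbd cs hij (injective_of_opt hk hb hsupp hcs hij) hxi
        refine mem_cthickening_of_dist_le x y t _ hy ?_
        rw [dist_eq_norm]
        refine hxy.trans ?_
        have hBL := qB_le hcs hij
        rw [← hBdef] at hBL
        have hL := hB.trans_le hBL
        rw [ht, div_le_div_iff₀ (by positivity) hB]
        have q1 : ‖x - cs j‖ ^ 2 - ‖x - cs i‖ ^ 2 ≤ 8 * M * d := by linarith
        calc (‖x - cs j‖ ^ 2 - ‖x - cs i‖ ^ 2) * B ≤ (8 * M * d) * B := by gcongr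
          _ ≤ (8 * M * d) * ‖cs i - cs j‖ := by gcongr
          _ = _ := by ring
      have hGx : G x = 8 * M * d := Set.indicator_of_mem hxK _
      rw [hGx]
      linarith
  have hint := integral_mono_ae ((integrable_finset_sum _ fun i _ => hFi i).sub hGi)
    ((integrable_qgamma hk hb c).sub (integrable_qgamma hk hb cs)) hpt
  simp only [Pi.sub_apply] at hint
  rw [integral_sub (integrable_finset_sum _ fun i _ => hFi i) hGi,
    integral_sub (integrable_qgamma hk hb c) (integrable_qgamma hk hb cs),
    integral_finset_sum _ fun i _ => hFi i] at hint
  have hFint : ∀ i, ∫ x, F i x ∂P = P.real (vcell k cs i) * ‖c i - cs i‖ ^ 2 := by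
    intro i
    rw [integral_indicator (vcell_closed cs i).measurableSet]
    have hI : Integrable (fun x => x - cs i) (P.restrict (vcell k cs i)) :=
      ((integrable_id' hb).sub (integrable_const _)).restrict
    have e1 : ∀ x, ‖x - c i‖ ^ 2 - ‖x - cs i‖ ^ 2 =
        ‖c i - cs i‖ ^ 2 - 2 * inner ℝ (c i - cs i) (x - cs i) := by
      intro x
      have : x - c i = (x - cs i) - (c i - cs i) := by abel
      rw [this, norm_sub_sq_real, real_inner_comm]
      ring
    simp_rw [e1]
    rw [integral_sub (integrable_const _) ((hI.const_inner _).const_mul _),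
      integral_const_mul, integral_inner hI, centroid hk hb hsupp hcs i, setIntegral_const]
    simp
  have hGint : ∫ x, G x ∂P = P.real K * (8 * M * d) := by
    rw [integral_indicator hKm, setIntegral_const, smul_eq_mul]
  have hKle : P.real K ≤ B * p * t / (128 * M ^ 2) := (le_pweight hcs t).trans (hp t ht0 htr)
  have hsum : p * d ^ 2 ≤ ∑ i, ∫ x, F i x ∂P := by
    rw [← hd, Finset.mul_sum]
    refine Finset.sum_le_sum fun i _ => ?_
    rw [hFint]
    have := qpmin_le hcs i
    gcongr
  have hGle : ∫ x, G x ∂P ≤ p * d ^ 2 / 4 := by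
    rw [hGint]
    calc P.real K * (8 * M * d) ≤ (B * p * t / (128 * M ^ 2)) * (8 * M * d) := by gcongr
      _ = p * d ^ 2 / 4 := by
        rw [ht]; field_simp; ring
  have hfin : ∑ i, ∫ x, F i x ∂P - ∫ x, G x ∂P ≤ qrisk k P c - qrisk k P cs := hint
  have : 0 ≤ p * d ^ 2 := by positivity
  linarith

lemma r0_lt [CompleteSpace H] (hk : 2 ≤ k) (hM : 0 < M)
    (hsupp : suppGT P k) {r0 : ℝ} (hmargin : margin k P M r0) (hne : (qopt k P).Nonempty) :
    r0 < 3 * M ∧ qB k P ≤ 2 * M := by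
  obtain ⟨hr0, hb, hp⟩ := hmargin
  have hB := qB_pos hk hb hM hsupp hne
  have hpm := qpmin_pos hk hb hM hsupp hne
  obtain ⟨cs, hcs⟩ := hne
  have hcsb := opt_ball hk hb hsupp hcs
  let i : Fin k := ⟨0, by omega⟩
  obtain ⟨j, hj⟩ := exists_ne_fin hk i
  have hL : ‖cs i - cs j‖ ≤ 2 * M := by
    linarith [norm_sub_le (cs i) (cs j), hcsb i, hcsb j]
  have hB2 : qB k P ≤ 2 * M := (qB_le hcs hj.symm).trans hL
  refine ⟨?_, hB2⟩
  by_contra hr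
  push Not at hr
  have hne := injective_of_opt hk hb hsupp hcs hj.symm
  have hLpos : 0 < ‖cs i - cs j‖ := norm_pos_iff.2 (sub_ne_zero.2 hne)
  obtain ⟨y, hy, hxy⟩ := near_nbd cs hj.symm hne (x := cs i) (by intro l; simp)
  have hxy' : ‖cs i - y‖ ≤ M := by
    refine hxy.trans ?_
    rw [div_le_iff₀ (by positivity)]
    simp only [sub_self, norm_zero]
    nlinarith
  have hfull : P.real (cthickening (3 * M) (nbd k cs)) = 1 := by
    have h1 : ∀ᵐ x ∂P, x ∈ cthickening (3 * M) (nbd k cs) := by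
      filter_upwards [ae_ball hb] with x hx
      refine mem_cthickening_of_dist_le x y _ _ hy ?_
      rw [dist_eq_norm]
      have h2 : x - y = (x - cs i) + (cs i - y) := by abel
      rw [h2]
      linarith [norm_add_le (x - cs i) (cs i - y), norm_sub_le x (cs i), hcsb i]
    rw [Measure.real, (prob_compl_eq_zero_iff isClosed_cthickening.measurableSet).1 h1]
    simp
  have h1 := (le_pweight hcs (3 * M)).trans (hp (3 * M) (by positivity) hr)
  rw [hfull, le_div_iff₀ (by positivity)] at h1
  have hp1 : qpmin k P ≤ 1 := (qpmin_le hcs i).trans measureReal_le_one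
  have h2 : qB k P * qpmin k P ≤ 2 * M * 1 := by gcongr
  nlinarith

lemma crossing (a b cs : Fin k → H) {ρ : ℝ} (ha : ρ ≤ ∑ i, ‖a i - cs i‖ ^ 2)
    (hb : ∑ i, ‖b i - cs i‖ ^ 2 ≤ ρ) :
    ∃ t : ℝ, 0 ≤ t ∧ t ≤ 1 ∧ ∑ i, ‖(a i + t • (b i - a i)) - cs i‖ ^ 2 = ρ := by
  have hf : Continuous (fun t : ℝ => ∑ i, ‖(a i + t • (b i - a i)) - cs i‖ ^ 2) := by fun_prop
  obtain ⟨t, ⟨h0, h1⟩, ht⟩ := intermediate_value_Icc' (zero_le_one' ℝ) hf.continuousOn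
    (show ρ ∈ Set.Icc _ _ from ⟨by simpa using hb, by simpa using ha⟩)
  exact ⟨t, h0, h1, ht⟩

lemma seg_ball {a b : H} (ha : ‖a‖ ≤ M) (hb : ‖b‖ ≤ M) {t : ℝ} (h0 : 0 ≤ t) (h1 : t ≤ 1) :
    ‖a + t • (b - a)‖ ≤ M := by
  have e : a + t • (b - a) = (1 - t) • a + t • b := by module
  rw [e]
  have h2 := norm_add_le ((1 - t) • a) (t • b)
  rw [norm_smul, norm_smul, Real.norm_of_nonneg h0,
    Real.norm_of_nonneg (by linarith : (0 : ℝ) ≤ 1 - t)] at h2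
  nlinarith

lemma local_bound' [CompleteSpace H] (hk : 2 ≤ k) (hM : 0 < M)
    (hsupp : suppGT P k) {r0 : ℝ} (hmargin : margin k P M r0) {c cs : Fin k → H}
    (hcs : cs ∈ qopt k P) (hc : ∀ i, ‖c i‖ ≤ M)
    (hd : ∑ i, ‖c i - cs i‖ ^ 2 ≤ qB k P ^ 2 * r0 ^ 2 / (32 * M ^ 2)) :
    qpmin k P / 2 * ∑ i, ‖c i - cs i‖ ^ 2 ≤ qrisk k P c - qrisk k P cs := by
  have hB := qB_pos hk hmargin.2.1 hM hsupp ⟨cs, hcs⟩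
  have hr0 := hmargin.1
  have hD : 0 ≤ ∑ i, ‖c i - cs i‖ ^ 2 := Finset.sum_nonneg fun i _ => by positivity
  have hsq := Real.sq_sqrt hD
  have := local_bound hk hM hsupp hmargin hcs hc (Real.sqrt_nonneg _) hsq.symm (by
    rw [← hsq, le_div_iff₀ (by positivity)] at hd
    refine le_of_sq_le_sq ?_ (by positivity)
    have h1 : 0 ≤ √(∑ i, ‖c i - cs i‖ ^ 2) ^ 2 * M ^ 2 := by positivity
    nlinarith)
  rwa [hsq] at this

lemma exists_local_min [CompleteSpace H] (hk : 2 ≤ k) (hM : 0 < M)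
    (hsupp : suppGT P k) {r0 : ℝ} (hmargin : margin k P M r0) {c0 cs0 : Fin k → H}
    (hcs0 : cs0 ∈ qopt k P) (hc0 : ∀ i, ‖c0 i‖ ≤ M) {ρ : ℝ}
    (hρ : ρ = qB k P ^ 2 * r0 ^ 2 / (32 * M ^ 2))
    (hfar : ∀ cs ∈ qopt k P, ρ ≤ ∑ i, ‖c0 i - cs i‖ ^ 2)
    (hlt : qrisk k P c0 - qrisk k P cs0 < qpmin k P / 2 * ρ) :
    ∃ y : Fin k → H, IsLocalMin (qrisk k P) y ∧ y ∉ qopt k P ∧ qrisk k P y ≤ qrisk k P c0 := by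
  have hb := hmargin.2.1
  have hr0 := hmargin.1
  have hB := qB_pos hk hb hM hsupp ⟨cs0, hcs0⟩
  have hρpos : 0 < ρ := by rw [hρ]; positivity
  have barrier : ∀ cs ∈ qopt k P, ∀ c : Fin k → H, (∀ i, ‖c i‖ ≤ M) →
      ∑ i, ‖c i - cs i‖ ^ 2 = ρ → qrisk k P cs0 + qpmin k P / 2 * ρ ≤ qrisk k P c := by
    intro cs hcs c hc hD
    have h1 := local_bound' hk hM hsupp hmargin hcs hc (by rw [hD, hρ])
    rw [hD] at h1
    have h2 := hcs0 cs
    linarith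
  let A : Set (Fin k → H) := {c | (∀ i, ‖c i‖ ≤ M) ∧
    ∀ cs ∈ qopt k P, ρ ≤ ∑ i, ‖c i - cs i‖ ^ 2}
  have hAne : (qrisk k P '' A).Nonempty := ⟨_, c0, ⟨hc0, hfar⟩, rfl⟩
  have hAbdd : BddBelow (qrisk k P '' A) := by
    refine ⟨qrisk k P cs0, ?_⟩
    rintro _ ⟨c, _, rfl⟩
    exact hcs0 c
  set I := sInf (qrisk k P '' A) with hI
  have hIle : ∀ c ∈ A, I ≤ qrisk k P c := fun c hc => csInf_le hAbdd ⟨c, hc, rfl⟩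
  have hex : ∀ n : ℕ, ∃ c ∈ A, qrisk k P c < I + 1 / ((n : ℝ) + 1) := by
    intro n
    obtain ⟨_, ⟨c, hc, rfl⟩, h⟩ := exists_lt_of_csInf_lt hAne
      (show I < I + 1 / ((n : ℝ) + 1) by
        have : (0 : ℝ) < 1 / ((n : ℝ) + 1) := by positivity
        linarith)
    exact ⟨c, hc, h⟩
  choose u huA hur using hex
  obtain ⟨y, φ, δ, hφ, hy, hl, hδ, hR⟩ := weak_path hk hb hM u fun n => (huA n).1
  have hlim : Tendsto (fun n => I + 1 / (((φ n : ℕ) : ℝ) + 1) + δ n) atTop (𝓝 (I + 0 + 0)) :=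
    ((tendsto_one_div_add_atTop_nhds_zero_nat.comp hφ.tendsto_atTop).const_add _).add hδ
  simp only [add_zero] at hlim
  have hyI : qrisk k P y ≤ I := by
    refine ge_of_tendsto' hlim fun n => ?_
    have h1 := hR n 1 zero_le_one le_rfl
    have h2 := hur (φ n)
    simp only [one_smul, add_sub_cancel] at h1
    change qrisk k P y ≤ _ at h1
    linarith
  have hI0 : I ≤ qrisk k P c0 := hIle c0 ⟨hc0, hfar⟩
  have hyA : y ∈ A := by
    refine ⟨hy, ?_⟩
    by_contra hcon
    push Not at hcon
    obtain ⟨cs, hcs, hD⟩ := hcon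
    have : qrisk k P cs0 + qpmin k P / 2 * ρ ≤ I := by
      refine ge_of_tendsto' hlim fun n => ?_
      obtain ⟨t, h0, h1, ht⟩ := crossing (u (φ n)) y cs ((huA (φ n)).2 cs hcs) hD.le
      have h2 := barrier cs hcs _ (fun i => seg_ball ((huA (φ n)).1 i) (hy i) h0 h1) ht
      have h3 := hR n t h0 h1
      have h4 := hur (φ n)
      linarith
    linarith
  refine ⟨y, ?_, ?_, hyI.trans hI0⟩
  · set τ := (qrisk k P cs0 + qpmin k P / 2 * ρ - qrisk k P y) / (8 * M) with hτ
    have hτpos : 0 < τ := by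
      rw [hτ]
      apply div_pos _ (by positivity)
      linarith
    have hτ' : 4 * M * τ < qrisk k P cs0 + qpmin k P / 2 * ρ - qrisk k P y := by
      have : 8 * M * τ = qrisk k P cs0 + qpmin k P / 2 * ρ - qrisk k P y := by
        rw [hτ]; field_simp
      have h2 : 0 < M * τ := by positivity
      linarith
    have hev : ∀ᶠ c in 𝓝 y, ∀ i, ‖rproj M (c i) - y i‖ < τ := by
      rw [Filter.eventually_all]
      intro i
      have hcont : Continuous (fun c : Fin k → H => ‖rproj M (c i) - y i‖) :=
        (((rproj_cont hM).comp (continuous_apply i)).sub continuous_const).norm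
      have h1 := hcont.tendsto y
      rw [rproj_of_le hM (hy i), sub_self, norm_zero] at h1
      exact h1.eventually (gt_mem_nhds hτpos)
    filter_upwards [hev] with c hc
    have hA' : (fun i => rproj M (c i)) ∈ A := by
      refine ⟨fun i => rproj_norm hM _, ?_⟩
      by_contra hcon
      push Not at hcon
      obtain ⟨cs, hcs, hD⟩ := hcon
      obtain ⟨t, h0, h1, ht⟩ := crossing y (fun i => rproj M (c i)) cs (hyA.2 cs hcs) hD.le
      have hz := fun i => seg_ball (hy i) (rproj_norm hM (c i)) h0 h1
      have h2 := barrier cs hcs _ hz ht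
      have h3 := qrisk_lip hk hb y (fun i => y i + t • (rproj M (c i) - y i)) τ hy hz (by
        intro i
        rw [add_sub_cancel_left, norm_smul, Real.norm_of_nonneg h0]
        have := hc i
        nlinarith [norm_nonneg (rproj M (c i) - y i)]) hM
      linarith
    exact hyI.trans ((hIle _ hA').trans (qrisk_rproj hk hb hM c))
  · intro hyo
    have := hyA.2 y hyo
    simp at this
    linarith

end helpers

/-- Proposition 2.2 (iv): `‖c − c*(c)‖² ≤ κ₀ ℓ(c, c*(c))`, where `c*(c)` is a
nearest optimal codebook and `κ₀ = 4kM² max(1/ε, 64M²/(p_min B² r₀²))`. -/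
theorem stmt5 [BorelSpace H] [SecondCountableTopology H] [CompleteSpace H]
    (k : ℕ) (hk : 2 ≤ k) (P : Measure H) [IsProbabilityMeasure P]
    (M : ℝ) (hM : 0 < M) (hsupp : suppGT P k) (hne : (qopt k P).Nonempty)
    (r0 ε : ℝ) (hmargin : margin k P M r0) (hε : 0 < ε) (hsep : qseparated k P ε) :
    ∀ c : Fin k → H, (∀ i, ‖c i‖ ≤ M) →
      ∀ cs ∈ qopt k P,
        (∀ cs' ∈ qopt k P, ∑ i, ‖c i - cs i‖ ^ 2 ≤ ∑ i, ‖c i - cs' i‖ ^ 2) →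
        ∑ i, ‖c i - cs i‖ ^ 2 ≤
          (4 * k * M ^ 2 * max (1 / ε) (64 * M ^ 2 / (qpmin k P * qB k P ^ 2 * r0 ^ 2))) *
            (qrisk k P c - qrisk k P cs) := by
  intro c hc cs hcs hnear
  have hb := hmargin.2.1
  have hr0 := hmargin.1
  have hB := qB_pos hk hb hM hsupp hne
  have hp := qpmin_pos hk hb hM hsupp hne
  obtain ⟨hr3, hB2⟩ := r0_lt hk hM hsupp hmargin hne
  have hcsb := opt_ball hk hb hsupp hcs
  have hl0 : 0 ≤ qrisk k P c - qrisk k P cs := sub_nonneg.2 (hcs c)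
  have hk1 : (2 : ℝ) ≤ k := by exact_mod_cast hk
  set B := qB k P with hBdef
  set p := qpmin k P with hpdef
  set l := qrisk k P c - qrisk k P cs with hl
  set D := ∑ i, ‖c i - cs i‖ ^ 2 with hD
  set Q := 64 * M ^ 2 / (p * B ^ 2 * r0 ^ 2) with hQ
  have hQ0 : 0 < Q := by positivity
  by_cases hcase : D ≤ B ^ 2 * r0 ^ 2 / (32 * M ^ 2)
  · have h1 : p / 2 * D ≤ l := local_bound' hk hM hsupp hmargin hcs hc hcase
    have hBr : B ^ 2 * r0 ^ 2 ≤ 36 * M ^ 4 := by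
      calc B ^ 2 * r0 ^ 2 ≤ (2 * M) ^ 2 * (3 * M) ^ 2 := by gcongr
        _ = 36 * M ^ 4 := by ring
    have h2 : 2 / p ≤ 4 * k * M ^ 2 * Q := by
      have e : 4 * k * M ^ 2 * Q = (256 * k * M ^ 4) / (p * (B ^ 2 * r0 ^ 2)) := by
        rw [hQ]; field_simp; ring
      rw [e, div_le_div_iff₀ hp (by positivity)]
      have h3 : 2 * (B ^ 2 * r0 ^ 2) ≤ 256 * k * M ^ 4 := by
        have : 0 < M ^ 4 := by positivity
        nlinarith
      nlinarith
    calc D = 2 / p * (p / 2 * D) := by field_simp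
      _ ≤ 2 / p * l := by gcongr
      _ ≤ (4 * k * M ^ 2 * Q) * l := by gcongr
      _ ≤ (4 * k * M ^ 2 * max (1 / ε) Q) * l := by
        gcongr
        exact le_max_right _ _
  · push Not at hcase
    have hDle : D ≤ 4 * k * M ^ 2 := by
      have h1 : D ≤ ∑ i : Fin k, (2 * M) ^ 2 := by
        refine Finset.sum_le_sum fun i _ => ?_
        have : ‖c i - cs i‖ ≤ 2 * M := by linarith [norm_sub_le (c i) (cs i), hc i, hcsb i]
        gcongr
      simp only [Finset.sum_const, Finset.card_univ, Fintype.card_fin, nsmul_eq_mul] at h1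
      linarith
    have hone : 1 ≤ max (1 / ε) Q * l := by
      by_cases hlt : l < p / 2 * (B ^ 2 * r0 ^ 2 / (32 * M ^ 2))
      · obtain ⟨y, hy1, hy2, hy3⟩ := exists_local_min hk hM hsupp hmargin hcs hc rfl
          (fun cs' hcs' => hcase.le.trans (hnear cs' hcs')) hlt
        have h1 : ε ≤ qrisk k P y - qrisk k P cs := by
          rw [← hsep cs hcs]
          refine csInf_le ⟨0, ?_⟩ ⟨y, hy1, hy2, rfl⟩
          rintro _ ⟨z, _, _, rfl⟩
          exact sub_nonneg.2 (hcs z)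
        have h2 : ε ≤ l := by linarith
        calc 1 = 1 / ε * ε := by field_simp
          _ ≤ max (1 / ε) Q * l := by
            gcongr
            exact le_max_left _ _
      · push Not at hlt
        calc 1 = Q * (p / 2 * (B ^ 2 * r0 ^ 2 / (32 * M ^ 2))) := by
              rw [hQ]; field_simp; norm_num
          _ ≤ Q * l := by gcongr
          _ ≤ max (1 / ε) Q * l := by
            gcongr
            exact le_max_right _ _
    calc D ≤ 4 * k * M ^ 2 * 1 := by linarith
      _ ≤ 4 * k * M ^ 2 * (max (1 / ε) Q * l) := by gcongr
      _ = _ := by ring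
end
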